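/- Let m ≥ 1 and let H = (h_{n,k})_{n,k∈ℕ} be an (m+2)-banded unit-lower-Hessenberg matrix of real numbers: h_{n,n+1} = 1 for all n, and h_{n,k} = 0 whenever k ≥ n+2 or k ≤ n−m−1. Suppose that for every n ≥ 1 the truncation H_n = (h_{i,j})_{0≤i,j≤n−1} is an oscillation matrix. Then for every n ≥ 1 the characteristic polynomial P_n(x) = det(x·I_n − H_n) has n distinct roots, all of which are real and positive; moreover the roots of consecutive polynomials strictly interlace: if x_1 < ⋯ < x_n are the roots of P_n and y_1 < ⋯ < y_{n+1} are the roots of P_{n+1}, then y_k < x_k < y_{k+1} for every 1 ≤ k ≤ n. -/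

import Mathlib

open Polynomial

/-- A real square matrix is totally positive if all its minors (with rows and columns
selected in strictly increasing order) are nonnegative. -/
def IsTotallyPos {n : ℕ} (A : Matrix (Fin n) (Fin n) ℝ) : Prop :=
  ∀ (p : ℕ) (ri cj : Fin p → Fin n), StrictMono ri → StrictMono cj →
    0 ≤ (A.submatrix ri cj).det

/-- A real square matrix is strictly totally positive if all its minors are positive. -/
def IsStrictlyTotallyPos {n : ℕ} (A : Matrix (Fin n) (Fin n) ℝ) : Prop :=
  ∀ (p : ℕ) (ri cj : Fin p → Fin n), StrictMono ri → StrictMono cj →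
    0 < (A.submatrix ri cj).det

/-- A real square matrix `A` is an oscillation matrix if it is totally positive and some
power `A^p` (`p ≥ 1`) is strictly totally positive. -/
def IsOscillation {n : ℕ} (A : Matrix (Fin n) (Fin n) ℝ) : Prop :=
  IsTotallyPos A ∧ ∃ p : ℕ, 1 ≤ p ∧ IsStrictlyTotallyPos (A ^ p)

section

open Matrix

theorem Matrix.det_mul_eq_sum_prod {m n R : Type*} [CommRing R] [Fintype m] [DecidableEq m]
    [Fintype n] (M : Matrix m n R) (N : Matrix n m R) :
    (M * N).det = ∑ f : m → n, (M.submatrix id f).det * ∏ i, N (f i) i := by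
  classical
  simp only [det_apply', mul_apply, Finset.prod_univ_sum, Finset.mul_sum,
    Fintype.piFinset_univ, Finset.sum_mul]
  rw [Finset.sum_comm]
  simp only [Finset.prod_mul_distrib, mul_assoc, submatrix_apply, id]

/-- The **Cauchy–Binet formula**, with the sum running over all maps instead of over the
increasing ones. -/
theorem Matrix.factorial_mul_det_mul {m n R : Type*} [CommRing R] [Fintype m] [DecidableEq m]
    [Fintype n] (M : Matrix m n R) (N : Matrix n m R) :
    ((Fintype.card m).factorial : R) * (M * N).det =
      ∑ f : m → n, (M.submatrix id f).det * (N.submatrix f id).det := by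
  classical
  have key (σ : Equiv.Perm m) : (M * N).det =
      ∑ f : m → n, (M.submatrix id f).det * (Equiv.Perm.sign σ * ∏ i, N (f (σ i)) i) := by
    rw [det_mul_eq_sum_prod, ← (σ.arrowCongr (Equiv.refl n)).symm.sum_comp]
    refine Finset.sum_congr rfl fun f _ => ?_
    have : M.submatrix id ((σ.arrowCongr (Equiv.refl n)).symm f) =
        (M.submatrix id f).submatrix id σ := rfl
    rw [this, det_permute']
    simp only [Equiv.arrowCongr_symm, Equiv.arrowCongr_apply, Equiv.refl_symm, Equiv.coe_refl,
      Function.comp, Equiv.symm_symm, id]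
    ring
  calc ((Fintype.card m).factorial : R) * (M * N).det = ∑ _σ : Equiv.Perm m, (M * N).det := by
        simp [Fintype.card_perm]
    _ = _ := by
        rw [Finset.sum_congr rfl fun σ _ => key σ, Finset.sum_comm]
        refine Finset.sum_congr rfl fun f _ => ?_
        rw [← Finset.mul_sum, det_apply' (N.submatrix f id)]
        rfl

theorem Matrix.det_mul_pos_of_minors {r n : ℕ} {M : Matrix (Fin r) (Fin n) ℝ}
    {N : Matrix (Fin n) (Fin r) ℝ}
    (hnonneg : ∀ s : Fin r → Fin n, StrictMono s →
      0 ≤ (M.submatrix id s).det * (N.submatrix s id).det)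
    (hpos : ∃ s : Fin r → Fin n,
      0 < (M.submatrix id s).det * (N.submatrix s id).det) :
    0 < (M * N).det := by
  obtain ⟨s, hs⟩ := hpos
  have hterm (f : Fin r → Fin n) : 0 ≤ (M.submatrix id f).det * (N.submatrix f id).det := by
    by_cases hf : Function.Injective f
    · have hmono : StrictMono (f ∘ Tuple.sort f) :=
        (Tuple.monotone_sort f).strictMono_of_injective (hf.comp (Tuple.sort f).injective)
      have h := hnonneg _ hmono
      have h₁ : M.submatrix id (f ∘ Tuple.sort f) =
        (M.submatrix id f).submatrix id (Tuple.sort f) := rfl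
      have h₂ : N.submatrix (f ∘ Tuple.sort f) id =
        (N.submatrix f id).submatrix (Tuple.sort f) id := rfl
      rw [h₁, h₂, det_permute', det_permute] at h
      have hsq : ((Equiv.Perm.sign (Tuple.sort f) : ℤ) : ℝ) *
          ((Equiv.Perm.sign (Tuple.sort f) : ℤ) : ℝ) = 1 := by
        rw [← Int.cast_mul, ← Units.val_mul, Int.units_mul_self]; simp
      rwa [mul_mul_mul_comm, hsq, one_mul] at h
    · obtain ⟨i, j, hij, hne⟩ := Function.not_injective_iff.1 hf
      rw [det_zero_of_column_eq hne (fun k => by simp [hij]), zero_mul]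
  have := factorial_mul_det_mul M N
  refine pos_of_mul_pos_right ?_ (Nat.cast_nonneg (Fintype.card (Fin r)).factorial)
  rw [this]
  exact Finset.sum_pos' (fun f _ => hterm f) ⟨s, Finset.mem_univ _, hs⟩

/-- For a strictly totally positive `B`, the minors of the Krylov matrix with rows `e₀ᵀ Bⁱ` on its
first `r` rows are nonnegative, and positive when the first column is among the chosen ones. -/
theorem krylov_minor_nonneg_and_pos {n : ℕ} {B : Matrix (Fin (n + 1)) (Fin (n + 1)) ℝ}
    (hB : IsStrictlyTotallyPos B) (r : ℕ) (s : Fin r → Fin (n + 1)) (hs : StrictMono s) :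
    0 ≤ (Matrix.of fun i j : Fin r => (B ^ (i : ℕ)) 0 (s j)).det ∧
    ((∀ i : Fin r, (i : ℕ) = 0 → s i = 0) →
      0 < (Matrix.of fun i j : Fin r => (B ^ (i : ℕ)) 0 (s j)).det) := by
  induction r with
  | zero => simp
  | succ r ih =>
    by_cases h0 : s 0 = 0
    · suffices 0 < (Matrix.of fun i j : Fin (r + 1) => (B ^ (i : ℕ)) 0 (s j)).det from
        ⟨this.le, fun _ => this⟩
      have hrow (j : Fin r) : (1 : Matrix (Fin (n + 1)) (Fin (n + 1)) ℝ) 0 (s j.succ) = 0 := by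
        refine one_apply_ne fun h => ?_
        have := hs (Fin.succ_pos j)
        rw [← h] at this
        exact absurd this (Fin.not_lt_zero _)
      rw [det_succ_row_zero, Fin.sum_univ_succ]
      simp only [of_apply, Fin.val_zero, pow_zero, hrow, h0, one_apply_eq, mul_zero, zero_mul,
        Finset.sum_const_zero, add_zero, one_mul]
      have hfac : (of fun i j : Fin (r + 1) => (B ^ (i : ℕ)) 0 (s j)).submatrix Fin.succ
          (Fin.succAbove 0) = (of fun (i : Fin r) j => (B ^ (i : ℕ)) 0 j) *
            B.submatrix id (s ∘ Fin.succ) := by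
        ext i j
        simp [mul_apply, pow_succ]
      rw [hfac]
      have hr : r ≤ n + 1 := by
        have := Fintype.card_le_of_injective s hs.injective
        simp at this; omega
      have hsucc : StrictMono (s ∘ Fin.succ) := hs.comp (Fin.strictMono_succ)
      refine det_mul_pos_of_minors (fun t ht => ?_) ⟨Fin.castLE hr, ?_⟩
      · exact mul_nonneg (ih t ht).1 (hB _ _ _ ht hsucc).le
      · refine mul_pos ((ih _ (Fin.strictMono_castLE hr)).2 fun i hi => ?_)
          (hB _ _ _ (Fin.strictMono_castLE hr) hsucc)
        ext; simpa using hi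
    · refine ⟨le_of_eq (det_eq_zero_of_row_eq_zero 0 fun j => ?_).symm,
        fun h => absurd (h 0 rfl) h0⟩
      simp only [of_apply, Fin.val_zero, pow_zero]
      refine one_apply_ne fun h => h0 ?_
      have := hs.monotone (Fin.zero_le j)
      rw [← h] at this
      exact Fin.le_zero_iff.1 this

/-- **Sylvester's criterion**. -/
theorem Matrix.posDef_of_leading_minors_pos (k : ℕ → ℕ → ℝ) (hk : ∀ i j, k i j = k j i) (n : ℕ)
    (hdet : ∀ r ≤ n, 0 < (of fun i j : Fin r => k i j).det) :
    (of fun i j : Fin n => k i j).PosDef := by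
  induction n with
  | zero => exact ⟨by ext i; exact i.elim0, fun x hx => absurd (Subsingleton.elim x 0) hx⟩
  | succ n ih =>
    have hA := ih fun r hr => hdet r (hr.trans n.le_succ)
    set A : Matrix (Fin n) (Fin n) ℝ := of fun i j => k i j
    set b : Matrix (Fin n) (Fin 1) ℝ := of fun i _ => k i n
    set D : Matrix (Fin 1) (Fin 1) ℝ := of fun _ _ => k n n
    have hblock : (of fun i j : Fin (n + 1) => k i j).submatrix finSumFinEquiv finSumFinEquiv =
        fromBlocks A b bᴴ D := by
      ext (i | i) (j | j) <;> simp [A, b, D, hk]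
    have := hA.isUnit.invertible
    have hdetn := hdet (n + 1) le_rfl
    rw [← det_submatrix_equiv_self finSumFinEquiv, hblock, det_fromBlocks₁₁] at hdetn
    have hschur : 0 < (D - bᴴ * A⁻¹ * b).det := by
      rw [← invOf_eq_nonsing_inv]
      exact pos_of_mul_pos_right hdetn (hdet n n.le_succ).le
    have hpsd : (fromBlocks A b bᴴ D).PosSemidef := by
      rw [PosDef.fromBlocks₁₁ b D hA]
      have h1 : D - bᴴ * A⁻¹ * b = diagonal fun _ => (D - bᴴ * A⁻¹ * b).det := by
        ext i j; fin_cases i; fin_cases j; simp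
      rw [h1]
      exact PosSemidef.diagonal fun _ => hschur.le
    have hpd : (fromBlocks A b bᴴ D).PosDef :=
      hpsd.posDef_iff_det_ne_zero.2 (by rw [det_fromBlocks₁₁]; exact hdetn.ne')
    rw [← hblock] at hpd
    simpa using hpd.submatrix finSumFinEquiv.symm.injective

theorem IsStrictlyTotallyPos.transpose {n : ℕ} {B : Matrix (Fin n) (Fin n) ℝ}
    (hB : IsStrictlyTotallyPos B) : IsStrictlyTotallyPos Bᵀ := fun p ri cj hri hcj => by
  rw [← transpose_submatrix, det_transpose]
  exact hB p cj ri hcj hri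

theorem IsStrictlyTotallyPos.submatrix_rev {n : ℕ} {B : Matrix (Fin n) (Fin n) ℝ}
    (hB : IsStrictlyTotallyPos B) : IsStrictlyTotallyPos (B.submatrix Fin.rev Fin.rev) :=
  fun p ri cj hri hcj => by
    have hrev {s : Fin p → Fin n} (hs : StrictMono s) : StrictMono (Fin.rev ∘ s ∘ Fin.rev) :=
      fun i j hij => Fin.rev_lt_rev.2 (hs (Fin.rev_lt_rev.2 hij))
    have := hB p _ _ (hrev hri) (hrev hcj)
    rw [← det_submatrix_equiv_self Fin.revPerm] at this
    convert this using 2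
    ext i j
    simp

theorem det_krylov_pos {n : ℕ} {B : Matrix (Fin (n + 1)) (Fin (n + 1)) ℝ}
    (hB : IsStrictlyTotallyPos B) :
    0 < (of fun i j : Fin (n + 1) => (B ^ (i : ℕ)) 0 j).det :=
  (krylov_minor_nonneg_and_pos hB (n + 1) id strictMono_id).2 fun _ hi => Fin.ext hi

theorem posDef_hankel {n : ℕ} {B : Matrix (Fin (n + 1)) (Fin (n + 1)) ℝ}
    (hB : IsStrictlyTotallyPos B) :
    (of fun i j : Fin (n + 1) => (B ^ ((i : ℕ) + j)) 0 0).PosDef := by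
  refine posDef_of_leading_minors_pos (fun i j => (B ^ (i + j)) 0 0)
    (fun i j => congrArg (fun k => (B ^ k) 0 0) (add_comm i j)) _ fun r hr => ?_
  have hfac : (of fun i j : Fin r => (B ^ ((i : ℕ) + j)) 0 0) =
      (of fun (i : Fin r) l => (B ^ (i : ℕ)) 0 l) *
        (of fun (j : Fin r) l => (Bᵀ ^ (j : ℕ)) 0 l)ᵀ := by
    ext i j
    simp [mul_apply, pow_add, ← transpose_pow]
  rw [hfac]
  have hcol (s : Fin r → Fin (n + 1)) :
      (((of fun (j : Fin r) l => (Bᵀ ^ (j : ℕ)) 0 l)ᵀ).submatrix s id).det =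
        (of fun i j : Fin r => (Bᵀ ^ (i : ℕ)) 0 (s j)).det := by
    rw [← det_transpose]; rfl
  have hcast (i : Fin r) (hi : (i : ℕ) = 0) : Fin.castLE hr i = 0 := by ext; simpa using hi
  refine det_mul_pos_of_minors (fun s hs => ?_) ⟨Fin.castLE hr, ?_⟩ <;> rw [hcol]
  · exact mul_nonneg (krylov_minor_nonneg_and_pos hB r s hs).1
      (krylov_minor_nonneg_and_pos hB.transpose r s hs).1
  · exact mul_pos ((krylov_minor_nonneg_and_pos hB r _ (Fin.strictMono_castLE hr)).2 hcast)
      ((krylov_minor_nonneg_and_pos hB.transpose r _ (Fin.strictMono_castLE hr)).2 hcast)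

/-- On the commutant of a strictly totally positive matrix, `M ↦ (M ^ 2)₀₀` is positive definite. -/
theorem mul_self_zero_zero_pos {n : ℕ} {B M : Matrix (Fin (n + 1)) (Fin (n + 1)) ℝ}
    (hB : IsStrictlyTotallyPos B) (hcomm : Commute M B) (hM : M ≠ 0) : 0 < (M * M) 0 0 := by
  set R : Matrix (Fin (n + 1)) (Fin (n + 1)) ℝ := of fun i j => (B ^ (i : ℕ)) 0 j
  have hRunit : IsUnit R.det := (det_krylov_pos hB).ne'.isUnit
  set c : Fin (n + 1) → ℝ := M 0 ᵥ* R⁻¹ with hc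
  have hcR : c ᵥ* R = M 0 := by
    rw [hc, vecMul_vecMul, nonsing_inv_mul R hRunit, vecMul_one]
  have hMeq : M = ∑ i, c i • B ^ (i : ℕ) := by
    set G := ∑ i, c i • B ^ (i : ℕ) with hG
    have hGcomm : Commute G B :=
      Commute.sum_left _ _ _ fun i _ => ((Commute.refl B).pow_left _).smul_left _
    have hrow (j : Fin (n + 1)) : (M - G) 0 j = 0 := by
      rw [Matrix.sub_apply, ← hcR, hG, Matrix.sum_apply, sub_eq_zero]
      simp [vecMul, dotProduct, R]
    have hzero : R * (M - G) = 0 := by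
      ext i j
      have h1 : (R * (M - G)) i j = (B ^ (i : ℕ) * (M - G)) 0 j := by simp [mul_apply, R]
      rw [h1, ((hcomm.sub_left hGcomm).pow_right i).eq.symm, mul_apply]
      simp [hrow]
    have := congrArg (R⁻¹ * ·) hzero
    simp only [nonsing_inv_mul_cancel_left _ _ hRunit, Matrix.mul_zero] at this
    exact sub_eq_zero.1 this
  have hc0 : c ≠ 0 := fun h => hM (by simp [hMeq, h])
  have hpos := (posDef_hankel hB).dotProduct_mulVec_pos hc0
  refine hpos.trans_eq (Eq.symm ?_)
  rw [hMeq, Finset.sum_mul_sum, Matrix.sum_apply]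
  simp only [Matrix.sum_apply, dotProduct, mulVec, of_apply, star_trivial, Finset.mul_sum]
  refine Finset.sum_congr rfl fun i _ => Finset.sum_congr rfl fun j _ => ?_
  rw [smul_mul_smul_comm, ← pow_add, Matrix.smul_apply, smul_eq_mul]
  ring

theorem mul_self_last_last_pos {n : ℕ} {B M : Matrix (Fin (n + 1)) (Fin (n + 1)) ℝ}
    (hB : IsStrictlyTotallyPos B) (hcomm : Commute M B) (hM : M ≠ 0) :
    0 < (M * M) (Fin.last n) (Fin.last n) := by
  have hmul (P Q : Matrix (Fin (n + 1)) (Fin (n + 1)) ℝ) :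
      P.submatrix Fin.rev Fin.rev * Q.submatrix Fin.rev Fin.rev =
        (P * Q).submatrix Fin.rev Fin.rev :=
    submatrix_mul_equiv P Q Fin.rev Fin.revPerm Fin.rev
  have h := mul_self_zero_zero_pos (M := M.submatrix Fin.rev Fin.rev) hB.submatrix_rev
    (by rw [Commute, SemiconjBy, hmul, hmul, hcomm.eq]) fun h => hM <| by
      ext i j
      simpa using congrFun (congrFun h i.rev) j.rev
  rw [hmul] at h
  simpa using h

theorem aeval_ne_zero_of_pow_isStrictlyTotallyPos {n p : ℕ}
    {A : Matrix (Fin (n + 1)) (Fin (n + 1)) ℝ} (hA : IsStrictlyTotallyPos (A ^ p)) {f : ℝ[X]}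
    (hf : f ≠ 0) (hdeg : f.degree < (n + 1 : ℕ)) : aeval A f ≠ 0 := by
  intro hzero
  have hlin : LinearIndependent ℝ fun i : Fin (n + 1) => (A ^ p) ^ (i : ℕ) := by
    have hrows := linearIndependent_rows_of_det_ne_zero (det_krylov_pos hA).ne'
    exact LinearIndependent.of_comp
      (LinearMap.proj (R := ℝ) (φ := fun _ : Fin (n + 1) => Fin (n + 1) → ℝ) 0) hrows
  set W := (degreeLT ℝ n).map (aeval A : ℝ[X] →ₐ[ℝ] _).toLinearMap with hW
  have hmem (i : Fin (n + 1)) : (A ^ p) ^ (i : ℕ) ∈ W := by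
    refine ⟨(X ^ p) ^ (i : ℕ) % f, ?_, ?_⟩
    · refine mem_degreeLT.2 ((EuclideanDomain.mod_lt _ hf).trans_le ?_)
      rw [degree_eq_natDegree hf] at hdeg ⊢
      norm_cast at hdeg ⊢
      omega
    · have := congrArg (aeval A) (EuclideanDomain.div_add_mod ((X ^ p) ^ (i : ℕ) : ℝ[X]) f)
      simpa [hzero] using this
  have hle : Submodule.span ℝ (Set.range fun i : Fin (n + 1) => (A ^ p) ^ (i : ℕ)) ≤ W :=
    Submodule.span_le.2 (Set.range_subset_iff.2 hmem)
  have h1 := Submodule.finrank_mono hle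
  rw [finrank_span_eq_card hlin, Fintype.card_fin] at h1
  have : FiniteDimensional ℝ (degreeLT ℝ n) := (degreeLTEquiv ℝ n).symm.finiteDimensional
  have h2 := Submodule.finrank_map_le (aeval A : ℝ[X] →ₐ[ℝ] _).toLinearMap (degreeLT ℝ n)
  have h3 := (degreeLTEquiv ℝ n).finrank_eq
  rw [Module.finrank_fin_fun] at h3
  rw [← hW] at h2
  omega

/-- A monic real polynomial has simple real roots if all its multiples are killed by a functional
that is positive definite on polynomials of smaller degree. -/
theorem exists_strictMono_roots {N : ℕ} {χ : ℝ[X]} (hmonic : χ.Monic) (hN : χ.natDegree = N)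
    (L : ℝ[X] →ₗ[ℝ] ℝ) (hker : ∀ f, L (χ * f) = 0)
    (hpos : ∀ f : ℝ[X], f ≠ 0 → f.degree < N → 0 < L (f * f)) :
    ∃ y : Fin N → ℝ, StrictMono y ∧ χ = ∏ k, (X - C (y k)) := by
  have hχ0 : χ ≠ 0 := hmonic.ne_zero
  have hdegχ : χ.degree = N := by rw [degree_eq_natDegree hχ0, hN]
  have hreal (z : ℂ) (hz : aeval z χ = 0) : z.im = 0 := by
    by_contra him
    obtain ⟨q, hq⟩ := χ.quadratic_dvd_of_aeval_eq_zero_im_ne_zero hz him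
    have hq0 : q ≠ 0 := by rintro rfl; simp at hq; exact hχ0 hq
    have hsq : X ^ 2 - C (2 * z.re) * X + C (‖z‖ ^ 2) =
        (X - C z.re) * (X - C z.re) + C (z.im ^ 2) := by
      have : ‖z‖ ^ 2 = z.re ^ 2 + z.im ^ 2 := by
        rw [← Complex.normSq_eq_norm_sq, Complex.normSq_apply]; ring
      rw [this]
      simp only [map_add, map_mul, map_pow, map_ofNat]
      ring
    have hmon2 : ((X - C z.re) * (X - C z.re) + C (z.im ^ 2)).Monic :=
      ((monic_X_sub_C _).mul (monic_X_sub_C _)).add_of_left (by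
        rw [degree_mul, degree_X_sub_C]
        exact degree_C_le.trans_lt (by norm_num))
    have hd2 : ((X - C z.re) * (X - C z.re) + C (z.im ^ 2)).natDegree = 2 := by
      rw [natDegree_add_C, natDegree_mul (X_sub_C_ne_zero _) (X_sub_C_ne_zero _)]
      simp
    rw [hsq] at hq
    have hdq : N = 2 + q.natDegree := by
      rw [← hN, hq, natDegree_mul hmon2.ne_zero hq0, hd2]
    have h := hker q
    rw [hq, show ((X - C z.re) * (X - C z.re) + C (z.im ^ 2)) * q * q =
      ((X - C z.re) * q) * ((X - C z.re) * q) + (z.im ^ 2) • (q * q) by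
        rw [smul_eq_C_mul]; ring, map_add, map_smul] at h
    have h1 := hpos ((X - C z.re) * q) (mul_ne_zero (X_sub_C_ne_zero _) hq0) (by
      rw [degree_mul, degree_X_sub_C, degree_eq_natDegree hq0, hdq]; norm_cast; omega)
    have h2 := hpos q hq0 (by rw [degree_eq_natDegree hq0, hdq]; norm_cast; omega)
    rw [smul_eq_mul] at h
    nlinarith [mul_nonneg (sq_nonneg z.im) h2.le]
  have hsplits : χ.Splits := by
    refine Splits.of_splits_map (algebraMap ℝ ℂ) (IsAlgClosed.splits _) fun z hz => ?_
    refine ⟨z.re, Complex.ext rfl (hreal z ?_).symm⟩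
    rw [← eval_map_algebraMap]
    exact (mem_roots'.1 hz).2
  have hnodup : χ.roots.Nodup := by
    rw [Multiset.nodup_iff_count_le_one]
    intro r
    rw [count_roots]
    by_contra! hr
    obtain ⟨q, hq⟩ := (pow_dvd_pow (X - C r) hr).trans (pow_rootMultiplicity_dvd χ r)
    have hq0 : q ≠ 0 := by rintro rfl; simp at hq; exact hχ0 hq
    have h := hker q
    rw [hq, show (X - C r) ^ 2 * q * q = ((X - C r) * q) * ((X - C r) * q) by ring] at h
    have hdq : N = 2 + q.natDegree := by
      rw [← hN, hq, natDegree_mul (pow_ne_zero _ (X_sub_C_ne_zero _)) hq0]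
      simp
    have h1 := hpos ((X - C r) * q) (mul_ne_zero (X_sub_C_ne_zero _) hq0) (by
      rw [degree_mul, degree_X_sub_C, degree_eq_natDegree hq0, hdq]; norm_cast; omega)
    exact h1.ne' h
  have hcard : χ.roots.toFinset.card = N := by
    rw [Multiset.toFinset_card_of_nodup hnodup, ← hN, hsplits.natDegree_eq_card_roots]
  refine ⟨χ.roots.toFinset.orderEmbOfFin hcard, OrderEmbedding.strictMono _, ?_⟩
  have hprod := hsplits.eq_prod_roots_of_monic hmonic
  have himage : Finset.univ.map (χ.roots.toFinset.orderEmbOfFin hcard).toEmbedding =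
      χ.roots.toFinset := Finset.map_orderEmbOfFin_univ _ _
  calc χ = ∏ a ∈ χ.roots.toFinset, (X - C a) := by
        rw [Finset.prod, Multiset.toFinset_val, hnodup.dedup]
        exact hprod
    _ = _ := by
      conv_lhs => rw [← himage]
      rw [Finset.prod_map]
      rfl

theorem interlace_of_eval {n : ℕ} {x : Fin n → ℝ} {y w : Fin (n + 1) → ℝ} (hx : StrictMono x)
    (hy : StrictMono y) (hw : ∀ k, 0 < w k)
    (heval : ∀ k, ∏ j, (y k - x j) = w k * ∏ j ∈ Finset.univ.erase k, (y k - y j)) (k : Fin n) :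
    y k.castSucc < x k ∧ x k < y k.succ := by
  set P : ℝ → ℝ := fun t => ∏ j, (t - x j)
  have hcont : Continuous P := by fun_prop
  have hsign (k : Fin (n + 1)) : 0 < (-1) ^ (n - (k : ℕ)) * P (y k) := by
    have hgt : (Finset.univ.filter (k < ·)).card = n - k := by
      rw [Finset.filter_lt_eq_Ioi, Fin.card_Ioi]; omega
    have hfac (j : Fin (n + 1)) (hj : j ∈ Finset.univ.erase k) :
        0 < (if k < j then -1 else 1) * (y k - y j) := by
      rcases lt_or_gt_of_ne (Finset.ne_of_mem_erase hj) with h | h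
      · simpa [h.not_gt] using hy h
      · simpa [h] using hy h
    have hone : (-1 : ℝ) ^ (n - (k : ℕ)) = ∏ j ∈ Finset.univ.erase k, if k < j then -1 else 1 := by
      rw [Finset.prod_erase _ (by simp), Finset.prod_ite]
      simp [hgt]
    have := Finset.prod_pos hfac
    rw [Finset.prod_mul_distrib, ← hone] at this
    have hPk : P (y k) = w k * ∏ j ∈ Finset.univ.erase k, (y k - y j) := heval k
    rw [hPk]
    have := mul_pos (hw k) this
    linarith
  have hroot (k : Fin n) : ∃ z ∈ Set.Ioo (y k.castSucc) (y k.succ), P z = 0 := by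
    have h1 := hsign k.castSucc
    have h2 := hsign k.succ
    have hlt : y k.castSucc < y k.succ := hy Fin.castSucc_lt_succ
    have hpow : n - (k.castSucc : ℕ) = n - (k.succ : ℕ) + 1 := by
      have := k.isLt
      simp; omega
    rw [hpow, pow_succ] at h1
    set e : ℝ := (-1) ^ (n - (k.succ : ℕ))
    obtain ⟨z, hz, hz0⟩ := intermediate_value_Ioo (f := fun t => e * P t) hlt.le
      (by fun_prop : Continuous fun t => e * P t).continuousOn
      (show (0 : ℝ) ∈ Set.Ioo _ _ from ⟨by linarith, h2⟩)
    refine ⟨z, hz, (mul_eq_zero.1 hz0).resolve_left ?_⟩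
    exact pow_ne_zero _ (by norm_num)
  choose z hz hz0 using hroot
  have hzmono : StrictMono z := fun i j hij =>
    (hz i).2.trans_le ((hy.monotone (Fin.succ_le_castSucc_iff.2 hij)).trans (hz j).1.le)
  have hmem (i : Fin n) : ∃ j, x j = z i := by
    obtain ⟨j, -, hj⟩ := Finset.prod_eq_zero_iff.1 (hz0 i)
    exact ⟨j, (sub_eq_zero.1 hj).symm⟩
  choose σ hσ using hmem
  have hσmono : StrictMono σ := fun i j hij => hx.lt_iff_lt.1 (by rw [hσ, hσ]; exact hzmono hij)
  have hσid : σ k = k := by rw [hσmono.eq_id, id]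
  have := hz k
  rwa [← hσ, hσid] at this

theorem prod_X_sub_C_dvd {ι K : Type*} [Fintype ι] [Field K] {y : ι → K}
    (hy : Function.Injective y) {f : K[X]} (hf : ∀ k, f.eval (y k) = 0) :
    ∏ k, (X - C (y k)) ∣ f :=
  Finset.prod_dvd_of_coprime ((pairwise_coprime_X_sub_C hy).set_pairwise _)
    fun k _ => dvd_iff_isRoot.2 (hf k)

theorem Matrix.charmatrix_mul_map_C {ι R : Type*} [Fintype ι] [DecidableEq ι] [CommRing R]
    {A N : Matrix ι ι R} {t : R} (h : A * N = t • N) :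
    charmatrix A * N.map C = (X - C t) • N.map C := by
  have hmap : A.map C * N.map C = C t • N.map C := by
    rw [← Matrix.map_mul, h]
    ext i j
    simp
  rw [charmatrix, sub_mul, RingHom.mapMatrix_apply, hmap, sub_smul, scalar_apply,
    ← smul_eq_diagonal_mul]

/-- The adjugate of the characteristic matrix, decomposed along the spectral projections of a
matrix with simple spectrum. -/
theorem Matrix.adjugate_charmatrix_eq_sum {ι K : Type*} [Fintype ι] [DecidableEq ι] [Nonempty ι]
    {κ : Type*} [Fintype κ] [DecidableEq κ] [Field K]
    {A : Matrix ι ι K} {y : κ → K} (hy : Function.Injective y)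
    (hA : A.charpoly = ∏ k, (X - C (y k))) :
    adjugate (charmatrix A) = ∑ k, (∏ j ∈ Finset.univ.erase k, (X - C (y j))) •
      (aeval A (Lagrange.basis Finset.univ y k)).map C := by
  have hdvd {f : K[X]} (hf : ∀ k, f.eval (y k) = 0) : aeval A f = 0 := by
    obtain ⟨g, rfl⟩ := prod_X_sub_C_dvd hy hf
    rw [← hA, map_mul, aeval_self_charpoly, zero_mul]
  have heig (k : κ) : A * aeval A (Lagrange.basis Finset.univ y k) =
      y k • aeval A (Lagrange.basis Finset.univ y k) := by
    have := hdvd (f := (X - C (y k)) * Lagrange.basis Finset.univ y k) fun j => by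
      rcases eq_or_ne k j with rfl | hkj
      · simp
      · simp [Lagrange.eval_basis_of_ne hkj (Finset.mem_univ j)]
    rw [map_mul, map_sub, aeval_X, aeval_C, sub_mul, sub_eq_zero] at this
    rw [this, Algebra.algebraMap_eq_smul_one, smul_one_mul]
  have hκ : Nonempty κ := by
    by_contra h
    rw [not_nonempty_iff] at h
    have := congrArg natDegree hA
    simp [charpoly_natDegree_eq_dim] at this
  have hsum : ∑ k, aeval A (Lagrange.basis Finset.univ y k) = 1 := by
    rw [← map_sum, Lagrange.sum_basis hy.injOn Finset.univ_nonempty, map_one]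
  have hmul : charmatrix A * ∑ k, (∏ j ∈ Finset.univ.erase k, (X - C (y j))) •
      (aeval A (Lagrange.basis Finset.univ y k)).map C = A.charpoly • 1 := by
    rw [Finset.mul_sum]
    calc _ = ∑ k, A.charpoly • (aeval A (Lagrange.basis Finset.univ y k)).map C := by
          refine Finset.sum_congr rfl fun k _ => ?_
          rw [Matrix.mul_smul, charmatrix_mul_map_C (heig k), smul_smul, hA,
            Finset.prod_erase_mul _ _ (Finset.mem_univ k)]
      _ = _ := by
          rw [← Finset.smul_sum]
          congr 1
          have := congrArg (C (R := K)).mapMatrix hsum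
          simpa only [map_sum, RingHom.mapMatrix_apply, map_one] using this
  have hcancel := congrArg (adjugate (charmatrix A) * ·) hmul
  simp only [← Matrix.mul_assoc, adjugate_mul, Matrix.smul_mul, Matrix.one_mul, Matrix.mul_smul,
    Matrix.mul_one] at hcancel
  exact (smul_right_injective _ A.charpoly_monic.ne_zero hcancel).symm

theorem Matrix.adjugate_charmatrix_last_last {n : ℕ} {R : Type*} [CommRing R]
    (A : Matrix (Fin (n + 1)) (Fin (n + 1)) R) :
    adjugate (charmatrix A) (Fin.last n) (Fin.last n) =
      (A.submatrix Fin.castSucc Fin.castSucc).charpoly := by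
  rw [adjugate_fin_succ_eq_det_submatrix, Fin.succAbove_last, charpoly]
  have : (charmatrix A).submatrix Fin.castSucc Fin.castSucc =
      charmatrix (A.submatrix Fin.castSucc Fin.castSucc) := by
    ext i j
    simp [charmatrix_apply, diagonal_apply]
  rw [this, Even.neg_one_pow ⟨_, rfl⟩, one_mul]

theorem commute_aeval_pow {R S : Type*} [CommSemiring R] [Semiring S] [Algebra R S] (a : S)
    (f : R[X]) (p : ℕ) : Commute (aeval a f) (a ^ p) := by
  have h : Commute (aeval a f) (aeval a (X ^ p)) := (Commute.all f (X ^ p)).map (aeval a)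
  rwa [map_pow, aeval_X] at h

theorem interlace_of_pow_isStrictlyTotallyPos {n p : ℕ}
    {A : Matrix (Fin (n + 1)) (Fin (n + 1)) ℝ} (hA : IsStrictlyTotallyPos (A ^ p))
    {x : Fin n → ℝ} {y : Fin (n + 1) → ℝ} (hx : StrictMono x) (hy : StrictMono y)
    (hAx : (A.submatrix Fin.castSucc Fin.castSucc).charpoly = ∏ k, (X - C (x k)))
    (hAy : A.charpoly = ∏ k, (X - C (y k))) (k : Fin n) :
    y k.castSucc < x k ∧ x k < y k.succ := by
  set E : Fin (n + 1) → Matrix (Fin (n + 1)) (Fin (n + 1)) ℝ :=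
    fun k => aeval A (Lagrange.basis Finset.univ y k)
  refine interlace_of_eval (w := fun k => E k (Fin.last n) (Fin.last n)) hx hy (fun k => ?_)
    (fun k => ?_) k
  · have hidem : E k * E k = E k := by
      obtain ⟨g, hg⟩ := prod_X_sub_C_dvd hy.injective
        (f := Lagrange.basis Finset.univ y k * Lagrange.basis Finset.univ y k -
          Lagrange.basis Finset.univ y k) fun j => by
        rcases eq_or_ne k j with rfl | hkj
        · simp [Lagrange.eval_basis_self hy.injective.injOn (Finset.mem_univ k)]
        · simp [Lagrange.eval_basis_of_ne hkj (Finset.mem_univ j)]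
      have := congrArg (aeval A) hg
      rwa [← hAy, map_mul, aeval_self_charpoly, zero_mul, map_sub, map_mul, sub_eq_zero] at this
    have hbasis : Lagrange.basis Finset.univ y k ≠ 0 :=
      Lagrange.basis_ne_zero hy.injective.injOn (Finset.mem_univ k)
    have hne : E k ≠ 0 := aeval_ne_zero_of_pow_isStrictlyTotallyPos hA hbasis (by
      rw [Lagrange.degree_basis hy.injective.injOn (Finset.mem_univ k)]
      simp
      norm_cast
      omega)
    have := mul_self_last_last_pos hA (commute_aeval_pow A _ p) hne
    rwa [hidem] at this
  · have h := congrFun (congrFun (adjugate_charmatrix_eq_sum hy.injective hAy) (Fin.last n))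
      (Fin.last n)
    rw [adjugate_charmatrix_last_last, hAx, Matrix.sum_apply] at h
    have h := congrArg (eval (y k)) h
    simp only [eval_prod, eval_sub, eval_X, eval_C, eval_finsetSum, Matrix.smul_apply,
      smul_eq_mul, eval_mul, map_apply] at h
    rw [h, Finset.sum_eq_single k]
    · rw [mul_comm]
    · intro j _ hjk
      rw [Finset.prod_eq_zero (Finset.mem_erase.2 ⟨hjk.symm, Finset.mem_univ k⟩) (sub_self _),
        zero_mul]
    · simp

theorem exists_charpoly_eq_prod_of_pow_isStrictlyTotallyPos {n p : ℕ}
    {A : Matrix (Fin n) (Fin n) ℝ} (hA : IsStrictlyTotallyPos (A ^ p)) :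
    ∃ y : Fin n → ℝ, StrictMono y ∧ A.charpoly = ∏ k, (X - C (y k)) := by
  cases n with
  | zero => exact ⟨Fin.elim0, fun i => i.elim0, by simp [charpoly]⟩
  | succ n =>
    refine exists_strictMono_roots A.charpoly_monic (by simp [charpoly_natDegree_eq_dim])
      (entryLinearMap ℝ ℝ (Fin.last n) (Fin.last n) ∘ₗ (aeval A : ℝ[X] →ₐ[ℝ] _).toLinearMap)
      (fun f => by simp [aeval_self_charpoly]) fun f hf hdeg => ?_
    simpa using mul_self_last_last_pos hA (commute_aeval_pow A f p)
      (aeval_ne_zero_of_pow_isStrictlyTotallyPos hA hf hdeg)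

theorem IsOscillation.det_pos {n : ℕ} {A : Matrix (Fin n) (Fin n) ℝ} (hA : IsOscillation A) :
    0 < A.det := by
  obtain ⟨hTP, p, hp, hSTP⟩ := hA
  refine lt_of_le_of_ne (by simpa using hTP n id id strictMono_id strictMono_id) fun h => ?_
  have := hSTP n id id strictMono_id strictMono_id
  rw [submatrix_id_id, det_pow, ← h, zero_pow (by omega)] at this
  exact lt_irrefl _ this

end

/-- If all the truncations `H_n` of an `(m+2)`-banded unit-lower-Hessenberg real matrix are
oscillation matrices, then each characteristic polynomial `P_n(x) = det(x·I_n − H_n)` has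
`n` distinct roots, all real and positive, and the roots of consecutive polynomials
strictly interlace. -/
theorem stmt5 (m : ℕ) (hm : 1 ≤ m) (h : ℕ → ℕ → ℝ)
    (hsup : ∀ n, h n (n + 1) = 1)
    (hband : ∀ n k, (n + 2 ≤ k ∨ k + m + 1 ≤ n) → h n k = 0)
    (hosc : ∀ n : ℕ, 1 ≤ n →
      IsOscillation (Matrix.of fun i j : Fin n => h (i : ℕ) (j : ℕ))) :
    ∃ x : (n : ℕ) → Fin n → ℝ,
      (∀ n, StrictMono (x n)) ∧
      (∀ n k, 0 < x n k) ∧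
      (∀ n : ℕ, 1 ≤ n →
        Matrix.charpoly (Matrix.of fun i j : Fin n => h (i : ℕ) (j : ℕ))
          = ∏ k : Fin n, (X - C (x n k))) ∧
      (∀ n (k : Fin n), x (n + 1) k.castSucc < x n k ∧ x n k < x (n + 1) k.succ) := by
  have hfactor (n : ℕ) : ∃ y : Fin n → ℝ, StrictMono y ∧
      (Matrix.of fun i j : Fin n => h i j).charpoly = ∏ k, (X - C (y k)) := by
    rcases Nat.eq_zero_or_pos n with rfl | hn
    · exact ⟨Fin.elim0, fun i => i.elim0, by simp [Matrix.charpoly]⟩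
    · obtain ⟨-, p, -, hSTP⟩ := hosc n hn
      exact exists_charpoly_eq_prod_of_pow_isStrictlyTotallyPos hSTP
  choose x hmono hchar using hfactor
  have hinter (n : ℕ) (k : Fin n) :
      x (n + 1) k.castSucc < x n k ∧ x n k < x (n + 1) k.succ := by
    obtain ⟨-, p, -, hSTP⟩ := hosc (n + 1) n.succ_pos
    exact interlace_of_pow_isStrictlyTotallyPos hSTP (hmono n) (hmono (n + 1)) (hchar n)
      (hchar (n + 1)) k
  have hpos (n : ℕ) : ∀ k, 0 < x n k := by
    induction n with
    | zero => exact fun k => k.elim0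
    | succ n ih =>
      have hsucc (k : Fin n) : 0 < x (n + 1) k.succ := (ih k).trans (hinter n k).2
      have hdet := (hosc (n + 1) n.succ_pos).det_pos
      rw [Matrix.det_eq_sign_charpoly_coeff, hchar, coeff_zero_eq_eval_zero, eval_prod] at hdet
      simp only [eval_sub, eval_X, eval_C, zero_sub, Finset.prod_neg, Finset.card_univ] at hdet
      rw [← mul_assoc, ← mul_pow, neg_one_mul, neg_neg, one_pow, one_mul,
        Fin.prod_univ_succ] at hdet
      exact Fin.cases (pos_of_mul_pos_left hdet (Finset.prod_nonneg fun k _ => (hsucc k).le)) hsucc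
  exact ⟨x, hmono, hpos, fun n _ => hchar n, hinter⟩
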